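/- Every infinite virtually cyclic group V contains a unique maximal normal finite subgroup K_V; that is, there is a finite normal subgroup K_V of V such that every finite normal subgroup of V is contained in K_V. -/

import Mathlib

/-- A group is virtually cyclic if it contains a cyclic subgroup of finite index. -/
def VirtuallyCyclic (G : Type*) [Group G] : Prop :=
  ∃ H : Subgroup G, IsCyclic ↥H ∧ H.FiniteIndex

/-- An infinite virtually cyclic group is of type I if it admits a surjective
homomorphism onto the infinite cyclic group ℤ. -/
def IsTypeI (G : Type*) [Group G] : Prop :=
  ∃ f : G →* Multiplicative ℤ, Function.Surjective f

/-- An infinite virtually cyclic group is of type II if it admits a surjective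
homomorphism onto the infinite dihedral group D∞. -/
def IsTypeII (G : Type*) [Group G] : Prop :=
  ∃ f : G →* DihedralGroup 0, Function.Surjective f

/-- Every infinite virtually cyclic group contains a unique maximal normal finite subgroup:
a finite normal subgroup containing every finite normal subgroup. -/
theorem exists_unique_maximal_normal_finite_subgroup (V : Type*) [Group V] [Infinite V]
    (hV : VirtuallyCyclic V) :
    ∃! K : Subgroup V, K.Normal ∧ Finite K ∧
      ∀ L : Subgroup V, L.Normal → Finite L → L ≤ K := by
  classical
  obtain ⟨H, hc, hfi⟩ := hV
  have hHinf : Infinite H := by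
    by_contra h
    rw [not_infinite_iff_finite] at h
    have : Finite V := by
      have e := Subgroup.groupEquivQuotientProdSubgroup (s := H)
      exact Finite.of_equiv _ e.symm
    exact not_finite V
  obtain ⟨g, hg⟩ := hc.exists_generator
  have hg0 : orderOf g = 0 := Infinite.orderOf_eq_zero_of_forall_mem_zpowers hg
  have htriv : ∀ x ∈ H, IsOfFinOrder x → x = 1 := by
    intro x hx hfin
    obtain ⟨k, hk⟩ := Subgroup.mem_zpowers_iff.mp (hg ⟨x, hx⟩)
    obtain ⟨m, hm, hxm⟩ := isOfFinOrder_iff_pow_eq_one.mp hfin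
    have h1 : g ^ (k * (m : ℤ)) = 1 := by
      rw [zpow_mul, hk, zpow_natCast]
      ext
      simpa using hxm
    have h2 := orderOf_dvd_iff_zpow_eq_one.mpr h1
    rw [hg0] at h2
    have h3 : k * (m : ℤ) = 0 := by simpa using h2
    have h4 : k = 0 := by
      rcases mul_eq_zero.mp h3 with h | h
      · exact h
      · omega
    rw [h4, zpow_zero] at hk
    simpa using (congrArg Subtype.val hk).symm
  have hbound : ∀ L : Subgroup V, Finite L → Nat.card L ≤ H.index := by
    intro L hL
    have : Finite (V ⧸ H) := Subgroup.finite_quotient_of_finiteIndex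
    refine Nat.card_le_card_of_injective (fun x : L => ((x : V) : V ⧸ H)) ?_
    intro a b hab
    have hab' : (a : V)⁻¹ * b ∈ H := QuotientGroup.eq.mp hab
    have hf : IsOfFinOrder ((a : V)⁻¹ * b) := by
      have := isOfFinOrder_of_finite (a⁻¹ * b)
      simpa using (Subgroup.subtype L).isOfFinOrder this
    have := htriv _ hab' hf
    exact Subtype.ext (inv_mul_eq_one.mp this)
  let P : ℕ → Prop := fun n => ∃ K : Subgroup V, K.Normal ∧ Finite K ∧ Nat.card K = n
  have hP1 : P 1 := ⟨⊥, inferInstance, inferInstance, by simp⟩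
  have hle1 : 1 ≤ H.index := Nat.one_le_iff_ne_zero.mpr hfi.index_ne_zero
  obtain ⟨K, hKn, hKf, hKc⟩ : P (Nat.findGreatest P H.index) :=
    Nat.findGreatest_spec hle1 hP1
  have hmax : ∀ L : Subgroup V, L.Normal → Finite L → L ≤ K := by
    intro L hLn hLf
    have hfin : Finite (K ⊔ L : Subgroup V) := by
      have h : ((K ⊔ L : Subgroup V) : Set V).Finite := by
        rw [Subgroup.mul_normal]
        exact (Set.toFinite (K : Set V)).mul (Set.toFinite (L : Set V))
      exact h.to_subtype
    have hcard : Nat.card (K ⊔ L : Subgroup V) ≤ Nat.card K := by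
      rw [hKc]
      exact Nat.le_findGreatest (hbound _ hfin) ⟨K ⊔ L, inferInstance, hfin, rfl⟩
    have heq : K = K ⊔ L := Subgroup.eq_of_le_of_card_ge le_sup_left hcard
    rw [heq]
    exact le_sup_right
  refine ⟨K, ⟨hKn, hKf, hmax⟩, ?_⟩
  rintro K' ⟨hn, hf, hm⟩
  exact le_antisymm (hmax K' hn hf) (hm K hKn hKf)
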